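/- Let S be a set of 4-permutations whose cover matrix is not constant (not all sixteen entries are equal). Then there exists an integer n ≥ 2 such that the gradient ∇h_{S,n}(0,…,0) = (∂h_{S,n}/∂x_{ij}(0,…,0))_{i,j∈[n−1]} is non-zero. -/

import Mathlib

open MeasureTheory Filter

noncomputable section

/-- A permuton: a Borel probability measure on `ℝ × ℝ` (supported on `[0,1]²`)
with uniform marginals. -/
def IsPermuton (μ : Measure (ℝ × ℝ)) : Prop :=
  IsProbabilityMeasure μ ∧
    (∀ x x' : ℝ, 0 ≤ x → x ≤ x' → x' ≤ 1 →
      μ (Set.Icc x x' ×ˢ Set.Icc (0 : ℝ) 1) = ENNReal.ofReal (x' - x)) ∧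
    (∀ y y' : ℝ, 0 ≤ y → y ≤ y' → y' ≤ 1 →
      μ (Set.Icc (0 : ℝ) 1 ×ˢ Set.Icc y y') = ENNReal.ofReal (y' - y))

/-- The uniform permuton: two-dimensional Lebesgue measure on `[0,1]²`. -/
def uniformPermuton : Measure (ℝ × ℝ) :=
  volume.restrict (Set.Icc (0 : ℝ) 1 ×ˢ Set.Icc (0 : ℝ) 1)

/-- The support of a Borel measure: all points each of whose open neighbourhoods has
positive measure. -/
def measSupport (μ : Measure (ℝ × ℝ)) : Set (ℝ × ℝ) :=
  {p | ∀ U : Set (ℝ × ℝ), IsOpen U → p ∈ U → 0 < μ U}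

/-- The pattern density of a `k`-permutation `π` in a measure `μ` on `ℝ × ℝ`:
the `μ^{⊗ k}`-probability that `k` sampled points, relabelled so that their
`x`-coordinates increase, have `y`-coordinates ordered according to `π`. -/
def PermutonDensity {k : ℕ} (π : Equiv.Perm (Fin k)) (μ : Measure (ℝ × ℝ)) : ℝ :=
  ((Measure.pi fun _ : Fin k => μ)
    {p : Fin k → ℝ × ℝ | ∃ σ : Equiv.Perm (Fin k),
      StrictMono (fun i => (p (σ i)).1) ∧
        ∀ i j : Fin k, (p (σ i)).2 < (p (σ j)).2 ↔ π i < π j}).toReal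

open scoped Classical in
/-- The pattern density of a `k`-permutation `π` in an `n`-permutation `Π`:
the proportion of `k`-element subsets of `Fin n` on which `Π` induces the pattern `π`
(zero when `n < k`). -/
def PatternDensity {k n : ℕ} (π : Equiv.Perm (Fin k)) (Perm : Equiv.Perm (Fin n)) : ℝ :=
  ((Finset.univ.filter fun A : Finset (Fin n) =>
      ∃ h : A.card = k, ∀ i j : Fin k,
        Perm ↑(A.orderIsoOfFin h i) < Perm ↑(A.orderIsoOfFin h j) ↔ π i < π j).card : ℝ) /
    (n.choose k)

/-- A sequence of permutations (of varying orders) is quasirandom if the density of every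
pattern `π` converges to `1/|π|!`. -/
def Quasirandom (P : ℕ → (n : ℕ) × Equiv.Perm (Fin n)) : Prop :=
  ∀ (k : ℕ) (π : Equiv.Perm (Fin k)),
    Tendsto (fun i => PatternDensity π (P i).2) atTop (nhds (1 / (Nat.factorial k : ℝ)))

/-- A set `S` of `k`-permutations is `Σ`-forcing if a sequence of permutations is quasirandom
exactly when the sum of the densities of the patterns from `S` converges to `|S|/k!`. -/
def SigmaForcing {k : ℕ} (S : Finset (Equiv.Perm (Fin k))) : Prop :=
  ∀ P : ℕ → (n : ℕ) × Equiv.Perm (Fin n),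
    Quasirandom P ↔
      Tendsto (fun i => ∑ π ∈ S, PatternDensity π (P i).2) atTop
        (nhds ((S.card : ℝ) / (Nat.factorial k : ℝ)))

/-- The `4`-permutation written in one-line notation as `(a+1)(b+1)(c+1)(d+1)`
(inputs are 0-indexed). -/
def mk4 (a b c d : Fin 4) (h : Function.Bijective ![a, b, c, d] := by decide) :
    Equiv.Perm (Fin 4) :=
  Equiv.ofBijective _ h

/-- A doubly stochastic matrix: non-negative entries, all row and column sums equal to one. -/
def IsDoublyStochastic {n : ℕ} (A : Matrix (Fin n) (Fin n) ℝ) : Prop :=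
  (∀ i j, 0 ≤ A i j) ∧ (∀ i, ∑ j, A i j = 1) ∧ (∀ j, ∑ i, A i j = 1)

/-- The step permuton `μ[A]` associated with an `n × n` doubly stochastic matrix `A`. -/
def stepPermuton {n : ℕ} (A : Matrix (Fin n) (Fin n) ℝ) : Measure (ℝ × ℝ) :=
  ∑ i : Fin n, ∑ j : Fin n,
    ENNReal.ofReal (A i j * n) •
      volume.restrict
        (Set.Ico ((i : ℝ) / n) (((i : ℝ) + 1) / n) ×ˢ
          Set.Ico ((j : ℝ) / n) (((j : ℝ) + 1) / n))

/-- The matrix `B^{ij}` (0-indexed: `p, q ∈ [n-1]`): `+1` at positions `(p,q)` and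
`(p+1,q+1)`, `-1` at positions `(p,q+1)` and `(p+1,q)`, `0` elsewhere. -/
def Bmat (n : ℕ) (p q : Fin (n - 1)) : Matrix (Fin n) (Fin n) ℝ := fun a b =>
  (if (a : ℕ) = (p : ℕ) ∧ (b : ℕ) = (q : ℕ) then 1 else 0) +
    (if (a : ℕ) = (p : ℕ) + 1 ∧ (b : ℕ) = (q : ℕ) + 1 then 1 else 0) -
    (if (a : ℕ) = (p : ℕ) ∧ (b : ℕ) = (q : ℕ) + 1 then 1 else 0) -
    (if (a : ℕ) = (p : ℕ) + 1 ∧ (b : ℕ) = (q : ℕ) then 1 else 0)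

/-- The matrix `A + ∑_{i,j} x_{ij} B^{ij}` where `A` is the `n × n` matrix with all
entries `1/n`. -/
def pertMatrix (n : ℕ) (x : Fin (n - 1) × Fin (n - 1) → ℝ) : Matrix (Fin n) (Fin n) ℝ :=
  fun a b => 1 / n + ∑ p : Fin (n - 1) × Fin (n - 1), x p * Bmat n p.1 p.2 a b

/-- The function `h_{S,n}`: the sum over `π ∈ S` of the pattern density of `π` in the
step permuton of the perturbed matrix. -/
def hSN (n : ℕ) (S : Finset (Equiv.Perm (Fin 4))) (x : Fin (n - 1) × Fin (n - 1) → ℝ) : ℝ :=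
  ∑ π ∈ S, PermutonDensity π (stepPermuton (pertMatrix n x))

open scoped Classical in
/-- The cover matrix of a set `S` of `4`-permutations: `C i j` is the number of `π ∈ S`
with `π j = i`. -/
def coverMatrix (S : Finset (Equiv.Perm (Fin 4))) : Fin 4 → Fin 4 → ℕ := fun i j =>
  (S.filter fun π => π j = i).card

/-- The eight symmetry operations on `4`-permutations. -/
def symOps : List (Equiv.Perm (Fin 4) → Equiv.Perm (Fin 4)) :=
  [fun σ => σ,
   fun σ => σ * Fin.revPerm,
   fun σ => Fin.revPerm * σ,
   fun σ => Fin.revPerm * σ * Fin.revPerm,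
   fun σ => σ⁻¹,
   fun σ => σ⁻¹ * Fin.revPerm,
   fun σ => Fin.revPerm * σ⁻¹,
   fun σ => Fin.revPerm * σ⁻¹ * Fin.revPerm]

open scoped Classical in
/-- `T` is symmetric to `S` if one of the eight symmetry operations maps `S` onto `T`. -/
def SymmetricSets (S T : Finset (Equiv.Perm (Fin 4))) : Prop :=
  ∃ op ∈ symOps, T = S.image op

end

/-!
Let `D_i(m)` be the mass that the law of the `m`-th smallest of `k` uniform points of `[0, 1]` gives
to the cell `i` of the grid, minus the mass it gives to the cell `i + 1`. The cover matrix `C`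
enters because the derivative at the uniform permuton in the direction `B^{ij}` is a positive
multiple of the bilinear form `∑ C_{rm} D_i(m) D_j(r)`.

Up to normalization, the distribution functions of the order statistics are tails of Bernstein
polynomials. They are linearly independent, have degree at most `k`, and sum to `k X`. A combination
`∑ v_m D_i(m)` vanishes for all `i` exactly when the corresponding combination of tails has equal
increments over the `n` cells; if `n ≥ k`, this combination is then a polynomial of degree at most
`n` that agrees with a linear one at `n + 1` points, so it is a multiple of `X` and `v` is constant.
Hence, if all derivatives vanish, the pairing of the column `m` of `C` with `D_j` does not depend on
`m`, so any two columns differ by a constant vector, which is zero because the columns of `C` have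
equal sums. All columns of `C` being equal, the equality of the row sums makes `C` constant.
-/

section Bernstein

open Polynomial

theorem linearIndependent_bernsteinPolynomial (R : Type*) [CommRing R] [IsDomain R] [CharZero R]
    (k : ℕ) : LinearIndependent R fun j : Fin (k + 1) => bernsteinPolynomial R k j := by
  refine Fintype.linearIndependent_iff.2 fun w hw j => ?_
  induction j using WellFoundedLT.induction with
  | _ j ih =>
    have deriv_eq_zero : ∑ i, w i * (derivative^[j] (bernsteinPolynomial R k i)).eval 0 = 0 := by
      simpa [iterate_derivative_sum, iterate_derivative_smul, eval_finsetSum] using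
        congrArg (fun p => (derivative^[j] p).eval 0) hw
    rw [Finset.sum_eq_single j] at deriv_eq_zero
    · exact (mul_eq_zero.1 deriv_eq_zero).resolve_right
        (bernsteinPolynomial.iterate_derivative_at_0_ne_zero R k j (Nat.le_of_lt_succ j.2))
    · intro i _ hij
      rcases lt_or_gt_of_ne hij with hlt | hgt
      · rw [ih i hlt, zero_mul]
      · rw [bernsteinPolynomial.iterate_derivative_at_0_eq_zero_of_lt R k hgt, mul_zero]
    · simp

/-- The polynomial in `X` giving the probability that a binomial random variable with `k` trials and
success probability `X` exceeds `m`: a tail sum of Bernstein polynomials. -/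
noncomputable def bernsteinTail (k m : ℕ) : ℝ[X] :=
  ∑ j ∈ Finset.range (k + 1) with m < j, bernsteinPolynomial ℝ k j

theorem eval_zero_bernsteinTail (k m : ℕ) : (bernsteinTail k m).eval 0 = 0 := by
  rw [bernsteinTail, eval_finsetSum]
  refine Finset.sum_eq_zero fun j hj => ?_
  rw [bernsteinPolynomial.eval_at_0, if_neg (by grind)]

theorem natDegree_bernsteinTail_le (k m : ℕ) : (bernsteinTail k m).natDegree ≤ k := by
  refine natDegree_sum_le_of_forall_le _ _ fun j hj => ?_
  have hjk : j ≤ k := by grind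
  rw [bernsteinPolynomial]
  compute_degree
  omega

theorem sum_smul_bernsteinTail (k : ℕ) (v : Fin k → ℝ) :
    ∑ m, v m • bernsteinTail k m =
      ∑ j : Fin (k + 1), (∑ m with m.castSucc < j, v m) • bernsteinPolynomial ℝ k j := by
  simp only [bernsteinTail, Finset.smul_sum, Finset.sum_smul, Finset.sum_filter, ite_smul,
    zero_smul, Finset.sum_range, smul_ite, smul_zero, Fin.lt_def, Fin.val_castSucc]
  exact Finset.sum_comm

theorem linearIndependent_bernsteinTail (k : ℕ) :
    LinearIndependent ℝ fun m : Fin k => bernsteinTail k m := by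
  refine Fintype.linearIndependent_iff.2 fun v hv m => ?_
  rw [sum_smul_bernsteinTail] at hv
  have partial_sum_eq_zero := Fintype.linearIndependent_iff.1
    (linearIndependent_bernsteinPolynomial ℝ k) _ hv
  have filter_succ : (Finset.univ.filter fun l : Fin k => l.castSucc < m.succ) =
      insert m (Finset.univ.filter fun l : Fin k => l.castSucc < m.castSucc) := by
    ext l
    simp [le_iff_eq_or_lt]
  have sum_succ := partial_sum_eq_zero m.succ
  rwa [filter_succ, Finset.sum_insert (by simp), partial_sum_eq_zero m.castSucc, add_zero]
    at sum_succ

theorem sum_bernsteinTail (k : ℕ) : ∑ m : Fin k, bernsteinTail k m = k • X := by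
  have sum_one_smul := sum_smul_bernsteinTail k 1
  simp only [Pi.one_apply, one_smul] at sum_one_smul
  rw [sum_one_smul, ← bernsteinPolynomial.sum_smul, ← Fin.sum_univ_eq_sum_range
    (fun j => j • bernsteinPolynomial ℝ k j)]
  refine Finset.sum_congr rfl fun j _ => ?_
  have card_castSucc_lt : (Finset.univ.filter fun m : Fin k => m.castSucc < j).card = (j : ℕ) := by
    simpa [Fin.lt_def, Nat.le_of_lt_succ j.2] using Fin.card_filter_val_lt (n := k) (m := j)
  rw [Finset.sum_const, card_castSucc_lt, nsmul_one, Nat.cast_smul_eq_nsmul]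

/-- A combination of the tails has degree at most `k`, so equal increments over the `n ≥ k` cells
force it to be linear. -/
theorem eq_div_of_bernsteinTail_increments_eq {k n : ℕ} (hkn : k ≤ n) {v : Fin k → ℝ} {c : ℝ}
    (h : ∀ p < n, ∑ m, v m * ((bernsteinTail k m).eval ((p + 1) / n : ℝ) -
      (bernsteinTail k m).eval (p / n : ℝ)) = c) (m : Fin k) : v m = c * n / k := by
  have hk : (k : ℝ) ≠ 0 := Nat.cast_ne_zero.2 m.pos.ne'
  have hn : (n : ℝ) ≠ 0 := Nat.cast_ne_zero.2 (m.pos.trans_le hkn).ne'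
  let Q : ℝ[X] := ∑ m, v m • bernsteinTail k m
  have increment (p : ℕ) (hp : p < n) : Q.eval ((p + 1) / n : ℝ) = Q.eval (p / n : ℝ) + c := by
    rw [← h p hp]
    simp [Q, eval_finsetSum, mul_sub]
  have eval_Q (p : ℕ) (hp : p ≤ n) : Q.eval (p / n : ℝ) = p * c := by
    induction p with
    | zero => simp [Q, eval_finsetSum, eval_zero_bernsteinTail]
    | succ p ih =>
      rw [Nat.cast_succ, increment p (by omega), ih (by omega)]
      ring
  have natDegree_Q_le : Q.natDegree ≤ n :=
    (natDegree_sum_le_of_forall_le Finset.univ (fun m => v m • bernsteinTail k m) fun m _ =>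
      (natDegree_smul_le (v m) _).trans (natDegree_bernsteinTail_le k m)).trans hkn
  have Q_eq : Q = C (c * n) * X := by
    refine eq_of_natDegree_lt_card_of_eval_eq _ _ (f := fun p : Fin (n + 1) => (p / n : ℝ))
      (fun p q hpq => by simpa [hn, div_left_inj', Fin.ext_iff] using hpq) (fun p => ?_) ?_
    · rw [eval_Q p (by omega), eval_mul, eval_C, eval_X]
      field_simp
    · rw [Fintype.card_fin, Nat.lt_succ_iff]
      exact max_le natDegree_Q_le
        (((natDegree_C_mul_le _ _).trans natDegree_X_le).trans (m.pos.trans_le hkn))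
  have combination_eq_zero : ∑ m, (v m - c * n / k) • bernsteinTail k m = 0 := by
    simp only [sub_smul, Finset.sum_sub_distrib, ← Finset.smul_sum, sum_bernsteinTail]
    rw [show ∑ m, v m • bernsteinTail k m = Q from rfl, Q_eq, ← Nat.cast_smul_eq_nsmul ℝ, smul_smul,
      div_mul_cancel₀ _ hk, smul_eq_C_mul, sub_self]
  exact sub_eq_zero.1 (Fintype.linearIndependent_iff.1
    (linearIndependent_bernsteinTail k) _ combination_eq_zero m)

end Bernstein

section ProductMeasure

theorem measureReal_finsetSum_apply {κ α : Type*} [MeasurableSpace α] (t : Finset κ)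
    (m : κ → Measure α) [∀ c, IsFiniteMeasure (m c)] (E : Set α) :
    (∑ c ∈ t, m c).real E = ∑ c ∈ t, (m c).real E := by
  simp only [measureReal_def, Measure.coe_finsetSum, Finset.sum_apply]
  exact ENNReal.toReal_sum fun c _ => measure_ne_top _ _

theorem pi_finsetSum {ι : Type*} {κ α : ι → Type*} [Fintype ι] [DecidableEq ι]
    [∀ i, MeasurableSpace (α i)] (t : ∀ i, Finset (κ i)) (m : ∀ i, κ i → Measure (α i))
    [∀ i c, IsFiniteMeasure (m i c)] :
    Measure.pi (fun i => ∑ c ∈ t i, m i c) =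
      ∑ f ∈ Fintype.piFinset t, Measure.pi fun i => m i (f i) := by
  refine Measure.pi_eq fun s _ => ?_
  simp only [Measure.coe_finsetSum, Finset.sum_apply, Measure.pi_pi]
  exact (Finset.prod_univ_sum t fun i c => m i c (s i)).symm

theorem pi_ofReal_smul {ι : Type*} {α : ι → Type*} [Fintype ι] [∀ i, MeasurableSpace (α i)]
    (m : ∀ i, Measure (α i)) [∀ i, IsFiniteMeasure (m i)] {w : ι → ℝ} (hw : ∀ i, 0 ≤ w i) :
    Measure.pi (fun i => ENNReal.ofReal (w i) • m i) =
      ENNReal.ofReal (∏ i, w i) • Measure.pi m := by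
  have (i : ι) : IsFiniteMeasure (ENNReal.ofReal (w i) • m i) :=
    Measure.smul_finite _ ENNReal.ofReal_ne_top
  refine Measure.pi_eq fun s _ => ?_
  simp only [Measure.smul_apply, Measure.pi_pi, smul_eq_mul, Finset.prod_mul_distrib,
    ENNReal.ofReal_prod_of_nonneg fun i _ => hw i]

variable {ι κ α : Type*} [Fintype ι] [Fintype κ] [MeasurableSpace α]

theorem measureReal_pi_sum_ofReal_smul [DecidableEq ι] (m : κ → Measure α)
    [∀ c, IsFiniteMeasure (m c)] {w : κ → ℝ} (hw : ∀ c, 0 ≤ w c) (E : Set (ι → α)) :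
    (Measure.pi fun _ : ι => ∑ c, ENNReal.ofReal (w c) • m c).real E =
      ∑ f : ι → κ, (∏ l, w (f l)) * (Measure.pi fun l => m (f l)).real E := by
  have (c : κ) : IsFiniteMeasure (ENNReal.ofReal (w c) • m c) :=
    Measure.smul_finite _ ENNReal.ofReal_ne_top
  rw [pi_finsetSum (fun _ : ι => Finset.univ) fun _ c => ENNReal.ofReal (w c) • m c,
    Fintype.piFinset_univ]
  simp only [pi_ofReal_smul _ fun _ => hw _]
  have (f : ι → κ) : IsFiniteMeasure
      (ENNReal.ofReal (∏ l, w (f l)) • Measure.pi fun l => m (f l)) :=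
    Measure.smul_finite _ ENNReal.ofReal_ne_top
  simp only [measureReal_finsetSum_apply, measureReal_ennreal_smul_apply,
    ENNReal.toReal_ofReal (Finset.prod_nonneg fun _ _ => hw _)]

theorem measureReal_pi_update [DecidableEq ι] [DecidableEq κ] (m : κ → Measure α)
    [∀ c, IsFiniteMeasure (m c)] (l : ι) (c : κ) (E : Set (ι → α)) :
    (Measure.pi (Function.update (fun _ => ∑ c, m c) l (m c))).real E =
      ∑ f : ι → κ with f l = c, (Measure.pi fun i => m (f i)).real E := by
  let t : ι → Finset κ := Function.update (fun _ => Finset.univ) l {c}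
  have update_eq : Function.update (fun _ => ∑ c, m c) l (m c) = fun i => ∑ c ∈ t i, m c := by
    ext1 i
    rcases eq_or_ne i l with rfl | hi <;> simp [t, *]
  have filter_eq : (Finset.univ.filter fun f : ι → κ => f l = c) = Fintype.piFinset t := by
    ext f
    refine ⟨fun hf => Fintype.mem_piFinset.2 fun i => ?_, fun hf => ?_⟩
    · rcases eq_or_ne i l with rfl | hi <;> simp_all [t]
    · simpa [t] using Fintype.mem_piFinset.1 hf l
  rw [update_eq, pi_finsetSum, measureReal_finsetSum_apply, filter_eq]

theorem hasDerivAt_measureReal_pi_sum_smul [DecidableEq ι] (m : κ → Measure α)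
    [∀ c, IsFiniteMeasure (m c)] (a : κ → ℝ) (E : Set (ι → α)) :
    HasDerivAt
      (fun t : ℝ => (Measure.pi fun _ : ι => ∑ c, ENNReal.ofReal (1 + t * a c) • m c).real E)
      (∑ l, ∑ c, a c * (Measure.pi (Function.update (fun _ => ∑ c, m c) l (m c))).real E) 0 := by
  classical
  have expansion : (fun t : ℝ =>
      (Measure.pi fun _ : ι => ∑ c, ENNReal.ofReal (1 + t * a c) • m c).real E) =ᶠ[nhds 0]
      fun t => ∑ f : ι → κ, (∏ l, (1 + t * a (f l))) * (Measure.pi fun l => m (f l)).real E := by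
    have weight_nonneg : ∀ᶠ t : ℝ in nhds 0, ∀ c, 0 ≤ 1 + t * a c := by
      refine eventually_all.2 fun c => ?_
      have : ContinuousAt (fun t : ℝ => 1 + t * a c) 0 := by fun_prop
      exact this.eventually_const_le (by simp)
    filter_upwards [weight_nonneg] with t ht
    exact measureReal_pi_sum_ofReal_smul m ht E
  have deriv_prod (f : ι → κ) :
      HasDerivAt (fun t : ℝ => ∏ l, (1 + t * a (f l))) (∑ l, a (f l)) 0 := by
    have := HasDerivAt.fun_finsetProd (u := Finset.univ) (x := (0 : ℝ))
      fun l _ => ((hasDerivAt_id (0 : ℝ)).mul_const (a (f l))).const_add 1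
    simpa using this
  refine HasDerivAt.congr_of_eventuallyEq ?_ expansion
  convert HasDerivAt.fun_sum fun f (_ : f ∈ (Finset.univ : Finset (ι → κ))) =>
    (deriv_prod f).mul_const ((Measure.pi fun l => m (f l)).real E) using 1
  simp only [measureReal_pi_update, Finset.sum_mul]
  refine (Finset.sum_congr rfl fun l _ => ?_).trans Finset.sum_comm
  simp only [Finset.mul_sum]
  rw [← Finset.sum_fiberwise Finset.univ (fun f : ι → κ => f l)]
  refine Finset.sum_congr rfl fun c _ => Finset.sum_congr rfl fun f hf => ?_
  rw [(Finset.mem_filter.1 hf).2]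

theorem pi_update_restrict [DecidableEq ι] (μ : Measure α) [SigmaFinite μ] (l : ι)
    (s : Set α) :
    Measure.pi (Function.update (fun _ => μ) l (μ.restrict s)) =
      (Measure.pi fun _ => μ).restrict (Function.eval l ⁻¹' s) := by
  have h : (Function.update (fun _ => μ) l (μ.restrict s)) =
      fun i => μ.restrict (Function.update (fun _ => Set.univ) l s i) := by
    ext1 i
    rcases eq_or_ne i l with rfl | hi <;> simp [*]
  rw [h, ← Measure.restrict_pi_pi]
  exact congrArg _ (Set.eval_preimage).symm

end ProductMeasure

section OrderStatistics

variable {k : ℕ}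

theorem measurableSet_strictMono_comp (σ : Equiv.Perm (Fin k)) :
    MeasurableSet {x : Fin k → ℝ | StrictMono (x ∘ σ)} := by
  have eq_iInter : {x : Fin k → ℝ | StrictMono (x ∘ σ)} =
      ⋂ i, ⋂ j, ⋂ (_ : i < j), {x | x (σ i) < x (σ j)} := by
    ext x
    simp [StrictMono]
  rw [eq_iInter]
  exact .iInter fun i => .iInter fun j => .iInter fun _ =>
    measurableSet_lt (measurable_pi_apply _) (measurable_pi_apply _)

theorem pairwise_disjoint_strictMono_comp : Pairwise (Function.onFun Disjoint
    fun σ : Equiv.Perm (Fin k) => {x : Fin k → ℝ | StrictMono (x ∘ σ)}) := by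
  refine fun σ τ hne => Set.disjoint_left.2 fun x hσ hτ => hne ?_
  have x_injective : Function.Injective x := by
    simpa using hσ.injective.of_comp_right σ.surjective
  exact Equiv.ext fun i =>
    x_injective (congrFun (Tuple.unique_monotone hσ.monotone hτ.monotone) i)

/-- The law of the `m`-th (counted from `0`) of `k` independent `μ`-distributed points, restricted
to the event that the points come in increasing order. For an atomless `μ` this is `1 / k!` times
the law of the `m`-th order statistic. -/
noncomputable def orderStatMeasure (μ : Measure ℝ) (m : Fin k) : Measure ℝ :=
  ((Measure.pi fun _ : Fin k => μ).restrict {x | StrictMono x}).map (Function.eval m)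

instance isFiniteMeasure_orderStatMeasure (μ : Measure ℝ) [IsFiniteMeasure μ] (m : Fin k) :
    IsFiniteMeasure (orderStatMeasure μ m) := by
  rw [orderStatMeasure]
  infer_instance

theorem measureReal_orderStatMeasure (μ : Measure ℝ) [SigmaFinite μ] (σ : Equiv.Perm (Fin k))
    (m : Fin k) {s : Set ℝ} (hs : MeasurableSet s) :
    (orderStatMeasure μ m).real s =
      (Measure.pi fun _ => μ).real {x | StrictMono (x ∘ σ) ∧ x (σ m) ∈ s} := by
  have relabel := measurePreserving_piCongrLeft (fun _ : Fin k => μ) σ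
  have relabel_apply (x : Fin k → ℝ) (i : Fin k) :
      MeasurableEquiv.piCongrLeft (fun _ => ℝ) σ x (σ i) = x i := by
    rw [MeasurableEquiv.coe_piCongrLeft]
    exact Equiv.piCongrLeft_apply_apply (fun _ => ℝ) σ x i
  have measurableSet_event : MeasurableSet {x | StrictMono (x ∘ σ) ∧ x (σ m) ∈ s} :=
    (measurableSet_strictMono_comp σ).inter (measurable_pi_apply (σ m) hs)
  rw [orderStatMeasure, map_measureReal_apply (measurable_pi_apply m) hs,
    measureReal_restrict_apply (measurable_pi_apply m hs),
    ← relabel.measureReal_preimage measurableSet_event.nullMeasurableSet]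
  congr 1
  ext x
  simp [Function.comp_def, relabel_apply, and_comm]

theorem measureReal_pi_card_mem_eq {ι α : Type*} [Fintype ι] [MeasurableSpace α]
    (μ : Measure α) [IsProbabilityMeasure μ] {s : Set α} [DecidablePred (· ∈ s)]
    (hs : MeasurableSet s) (j : ℕ) :
    (Measure.pi fun _ : ι => μ).real {x | (Finset.univ.filter fun i => x i ∈ s).card = j} =
      (bernsteinPolynomial ℝ (Fintype.card ι) j).eval (μ.real s) := by
  classical
  let hits (x : ι → α) : Finset ι := Finset.univ.filter fun i => x i ∈ s
  have hits_preimage (A : Finset ι) :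
      hits ⁻¹' {A} = Set.univ.pi fun i => if i ∈ A then s else sᶜ := by
    ext x
    simp only [Set.mem_preimage, Set.mem_singleton_iff, Set.mem_univ_pi, Finset.ext_iff, hits,
      Finset.mem_filter, Finset.mem_univ, true_and]
    exact forall_congr' fun i => by split_ifs <;> simp [*]
  have measureReal_hits (A : Finset ι) : (Measure.pi fun _ : ι => μ).real (hits ⁻¹' {A}) =
      μ.real s ^ A.card * (1 - μ.real s) ^ (Fintype.card ι - A.card) := by
    rw [hits_preimage, measureReal_def, Measure.pi_pi, ENNReal.toReal_prod]
    simp only [apply_ite μ, apply_ite ENNReal.toReal, ← measureReal_def,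
      probReal_compl_eq_one_sub hs, Finset.prod_ite, Finset.prod_const, Finset.filter_not,
      Finset.card_sdiff]
    simp [Finset.card_univ]
  let sizeJ : Finset (Finset ι) := Finset.powersetCard j Finset.univ
  calc _ = (Measure.pi fun _ : ι => μ).real (hits ⁻¹' sizeJ) := by
        congr 1
        ext x
        simp [hits, sizeJ]
    _ = ∑ A ∈ sizeJ, (Measure.pi fun _ : ι => μ).real (hits ⁻¹' {A}) :=
        (sum_measureReal_preimage_singleton _ fun A _ => by
          rw [hits_preimage]
          exact .univ_pi fun i => by split_ifs <;> [exact hs; exact hs.compl]).symm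
    _ = _ := by
        simp only [measureReal_hits, bernsteinPolynomial, sizeJ]
        rw [Finset.sum_powersetCard j Finset.univ fun c =>
          μ.real s ^ c * (1 - μ.real s) ^ (Fintype.card ι - c)]
        simp [Finset.card_univ, mul_assoc]

theorem measureReal_pi_lt_card_mem {ι α : Type*} [Fintype ι] [MeasurableSpace α]
    (μ : Measure α) [IsProbabilityMeasure μ] {s : Set α} [DecidablePred (· ∈ s)]
    (hs : MeasurableSet s) (m : ℕ) :
    (Measure.pi fun _ : ι => μ).real {x | m < (Finset.univ.filter fun i => x i ∈ s).card} =
      (bernsteinTail (Fintype.card ι) m).eval (μ.real s) := by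
  let hitCount (x : ι → α) : ℕ := (Finset.univ.filter fun i => x i ∈ s).card
  have measurable_hitCount : Measurable hitCount := by
    simp only [hitCount, Finset.card_filter]
    exact Finset.measurable_fun_sum _ fun i _ =>
      Measurable.ite (measurable_pi_apply i hs) measurable_const measurable_const
  rw [bernsteinTail, Polynomial.eval_finsetSum, ← Finset.sum_congr rfl fun j _ =>
    measureReal_pi_card_mem_eq μ hs j]
  refine Eq.trans ?_ (sum_measureReal_preimage_singleton (f := hitCount) _ fun j _ =>
    measurable_hitCount (measurableSet_singleton j)).symm
  congr 1
  ext x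
  simp [hitCount, Finset.card_le_univ]

theorem ae_injective_pi {ι α : Type*} [Fintype ι] [MeasurableSpace α] [MeasurableEq α]
    (μ : Measure α) [IsProbabilityMeasure μ] [NullSingletonClass μ] :
    ∀ᵐ x ∂(Measure.pi fun _ : ι => μ), Function.Injective x := by
  have ae_ne_prod : ∀ᵐ p ∂(μ.prod μ), p ∈ (Set.diagonal α)ᶜ := by
    refine (Measure.ae_prod_mem_iff_ae_ae_mem measurableSet_diagonal.compl).2 <|
      .of_forall fun a => ?_
    filter_upwards [compl_mem_ae_iff.2 (measure_singleton a)] with b hb using Ne.symm hb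
  have ae_ne (i j : ι) (hij : i ≠ j) : ∀ᵐ x ∂(Measure.pi fun _ : ι => μ), x i ≠ x j := by
    have indep : ProbabilityTheory.IndepFun (fun x => x i) (fun x => x j)
        (Measure.pi fun _ : ι => μ) :=
      (ProbabilityTheory.iIndepFun_pi (X := fun _ => id) fun _ => aemeasurable_id).indepFun hij
    rw [ProbabilityTheory.indepFun_iff_map_prod_eq_prod_map_map
        (measurable_pi_apply i).aemeasurable (measurable_pi_apply j).aemeasurable,
      (measurePreserving_eval _ i).map_eq, (measurePreserving_eval _ j).map_eq] at indep
    rw [← indep] at ae_ne_prod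
    exact ae_of_ae_map (f := fun x : ι → α => (x i, x j))
      ((measurable_pi_apply i).prodMk (measurable_pi_apply j)).aemeasurable ae_ne_prod
  simp only [Function.Injective, eventually_all]
  intro i j
  by_cases hij : i = j
  · simp [hij]
  · filter_upwards [ae_ne i j hij] with x hx using fun h => absurd h hx

theorem factorial_mul_orderStatMeasure_Iio (μ : Measure ℝ) [IsProbabilityMeasure μ]
    [NullSingletonClass μ] (m : Fin k) (t : ℝ) :
    k.factorial * (orderStatMeasure μ m).real (Set.Iio t) =
      (bernsteinTail k m).eval (μ.real (Set.Iio t)) := by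
  classical
  have ae_sorted : ∀ᵐ x ∂(Measure.pi fun _ : Fin k => μ),
      ∃ σ : Equiv.Perm (Fin k), StrictMono (x ∘ σ) := by
    filter_upwards [ae_injective_pi μ] with x hx
    exact ⟨Tuple.sort x, (Tuple.monotone_sort x).strictMono_of_injective
      (hx.comp (Tuple.sort x).injective)⟩
  have lt_card_iff {x : Fin k → ℝ} {σ : Equiv.Perm (Fin k)} (hσ : StrictMono (x ∘ σ)) :
      (m : ℕ) < (Finset.univ.filter fun i => x i < t).card ↔ x (σ m) < t := by
    rw [← Finset.card_equiv σ (s := Finset.univ.filter fun i => x (σ i) < t) (by simp)]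
    exact Tuple.lt_card_lt_iff_apply_lt_of_monotone hσ.monotone
  calc _ = ∑ σ : Equiv.Perm (Fin k),
        (Measure.pi fun _ => μ).real {x | StrictMono (x ∘ σ) ∧ x (σ m) < t} := by
        simp only [← Set.mem_Iio, ← measureReal_orderStatMeasure μ _ m measurableSet_Iio]
        simp [Fintype.card_perm]
    _ = (Measure.pi fun _ => μ).real
          (⋃ σ : Equiv.Perm (Fin k), {x | StrictMono (x ∘ σ) ∧ x (σ m) < t}) := by
        refine (measureReal_iUnion_fintype ?_ fun σ => ?_).symm
        · exact fun σ τ hne => (pairwise_disjoint_strictMono_comp hne).mono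
            Set.inter_subset_left Set.inter_subset_left
        · exact (measurableSet_strictMono_comp σ).inter
            (measurable_pi_apply (σ m) measurableSet_Iio)
    _ = (Measure.pi fun _ => μ).real
          {x | (m : ℕ) < (Finset.univ.filter fun i => x i ∈ Set.Iio t).card} := by
        refine measureReal_congr ?_
        filter_upwards [ae_sorted] with x ⟨σ, hσ⟩
        refine propext (Set.mem_iUnion.trans ?_)
        exact ⟨fun ⟨τ, hτ, hlt⟩ => (lt_card_iff hτ).2 hlt, fun h => ⟨σ, hσ, (lt_card_iff hσ).1 h⟩⟩
    _ = _ := by rw [measureReal_pi_lt_card_mem μ measurableSet_Iio, Fintype.card_fin]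

end OrderStatistics

section Pattern

variable {k : ℕ}

/-- The event whose probability is the density of the pattern `π`: the points `p`, relabelled by
increasing first coordinates, have their second coordinates ordered according to `π`. -/
def patternEvent (π : Equiv.Perm (Fin k)) : Set (Fin k → ℝ × ℝ) :=
  {p | ∃ σ : Equiv.Perm (Fin k), StrictMono (fun i => (p (σ i)).1) ∧
    ∀ i j : Fin k, (p (σ i)).2 < (p (σ j)).2 ↔ π i < π j}

theorem strictMono_comp_mul_inv_iff (π σ : Equiv.Perm (Fin k)) (y : Fin k → ℝ) :
    StrictMono (y ∘ (σ * π⁻¹)) ↔ ∀ i j, y (σ i) < y (σ j) ↔ π i < π j := by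
  refine ⟨fun h i j => ?_, fun h i j hij => ?_⟩
  · simpa using h.lt_iff_lt (a := π i) (b := π j)
  · simpa using (h (π⁻¹ i) (π⁻¹ j)).2 (by simpa using hij)

theorem measureReal_patternEvent_inter_eval_preimage_prod (μ ν : Measure ℝ) [IsFiniteMeasure μ]
    [IsFiniteMeasure ν] (π : Equiv.Perm (Fin k)) (l : Fin k) {s t : Set ℝ} (hs : MeasurableSet s)
    (ht : MeasurableSet t) :
    (Measure.pi fun _ => μ.prod ν).real (patternEvent π ∩ Function.eval l ⁻¹' (s ×ˢ t)) =
      ∑ σ : Equiv.Perm (Fin k), (orderStatMeasure μ (σ⁻¹ l)).real s *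
        (orderStatMeasure ν (π (σ⁻¹ l))).real t := by
  let X (σ : Equiv.Perm (Fin k)) : Set (Fin k → ℝ) := {x | StrictMono (x ∘ σ) ∧ x l ∈ s}
  let Y (σ : Equiv.Perm (Fin k)) : Set (Fin k → ℝ) := {y | StrictMono (y ∘ (σ * π⁻¹)) ∧ y l ∈ t}
  have event_eq : patternEvent π ∩ Function.eval l ⁻¹' (s ×ˢ t) =
      MeasurableEquiv.arrowProdEquivProdArrow ℝ ℝ (Fin k) ⁻¹' ⋃ σ, X σ ×ˢ Y σ := by
    ext p
    rw [Set.preimage_iUnion, Set.mem_iUnion]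
    simp only [X, Y, strictMono_comp_mul_inv_iff]
    exact ⟨fun ⟨⟨σ, hx, hy⟩, hs, ht⟩ => ⟨σ, ⟨hx, hs⟩, hy, ht⟩,
      fun ⟨σ, ⟨hx, hs⟩, hy, ht⟩ => ⟨⟨σ, hx, hy⟩, hs, ht⟩⟩
  have measurableSet_prod (σ : Equiv.Perm (Fin k)) : MeasurableSet (X σ ×ˢ Y σ) :=
    ((measurableSet_strictMono_comp _).inter (measurable_pi_apply l hs)).prod
      ((measurableSet_strictMono_comp _).inter (measurable_pi_apply l ht))
  have disjoint_prod : Pairwise (Function.onFun Disjoint fun σ => X σ ×ˢ Y σ) :=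
    fun σ τ hne => Set.disjoint_prod.2 <| .inl <|
      (pairwise_disjoint_strictMono_comp hne).mono Set.inter_subset_left Set.inter_subset_left
  rw [event_eq, (measurePreserving_arrowProdEquivProdArrow ℝ ℝ (Fin k) (fun _ => μ)
      fun _ => ν).measureReal_preimage (MeasurableSet.iUnion measurableSet_prod).nullMeasurableSet,
    measureReal_iUnion_fintype disjoint_prod measurableSet_prod]
  refine Finset.sum_congr rfl fun σ _ => ?_
  rw [measureReal_prod_prod, measureReal_orderStatMeasure μ σ _ hs,
    measureReal_orderStatMeasure ν (σ * π⁻¹) _ ht]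
  simp [X, Y]

theorem sum_measureReal_patternEvent_inter_eval_preimage_prod (μ ν : Measure ℝ) [IsFiniteMeasure μ]
    [IsFiniteMeasure ν] (π : Equiv.Perm (Fin k)) {s t : Set ℝ} (hs : MeasurableSet s)
    (ht : MeasurableSet t) :
    ∑ l, (Measure.pi fun _ => μ.prod ν).real (patternEvent π ∩ Function.eval l ⁻¹' (s ×ˢ t)) =
      k.factorial * ∑ m, (orderStatMeasure μ m).real s * (orderStatMeasure ν (π m)).real t := by
  simp only [measureReal_patternEvent_inter_eval_preimage_prod μ ν π _ hs ht]
  rw [Finset.sum_comm, Finset.sum_congr rfl fun σ _ => Equiv.sum_comp σ⁻¹ fun m =>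
    (orderStatMeasure μ m).real s * (orderStatMeasure ν (π m)).real t]
  simp [Fintype.card_perm]

end Pattern

section Grid

/-- The `p`-th (counted from `0`) of the `n` half-open intervals of equal length that subdivide
`[0, 1)`. -/
def cell (n p : ℕ) : Set ℝ := Set.Ico ((p : ℝ) / n) ((p + 1) / n)

theorem measurableSet_cell {n p : ℕ} : MeasurableSet (cell n p) := measurableSet_Ico

theorem mem_cell_iff {n : ℕ} (hn : n ≠ 0) {p : ℕ} {x : ℝ} (hx : 0 ≤ x) :
    x ∈ cell n p ↔ ⌊x * n⌋₊ = p := by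
  have hn' : (0 : ℝ) < n := by positivity
  rw [Nat.floor_eq_iff (by positivity), cell, Set.mem_Ico, div_le_iff₀ hn', lt_div_iff₀ hn']

theorem cell_subset_Icc {n : ℕ} (p : Fin n) : cell n p ⊆ Set.Icc 0 1 := by
  have hn : (0 : ℝ) < n := Nat.cast_pos.2 p.pos
  have hp : (p + 1 : ℝ) ≤ n := by exact_mod_cast p.2
  exact fun x hx => ⟨le_trans (by positivity) hx.1, hx.2.le.trans ((div_le_one hn).2 hp)⟩

/-- The cell of the `n × n` grid on the unit square with column `c.1` and row `c.2`. -/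
def gridCell {n : ℕ} (c : Fin n × Fin n) : Set (ℝ × ℝ) := cell n c.1 ×ˢ cell n c.2

theorem measurableSet_gridCell {n : ℕ} (c : Fin n × Fin n) : MeasurableSet (gridCell c) :=
  measurableSet_cell.prod measurableSet_cell

/-- Lebesgue measure on the unit interval, as a measure on the real line. -/
noncomputable abbrev unitMeasure : Measure ℝ := volume.restrict (Set.Icc 0 1)

instance isProbabilityMeasure_unitMeasure : IsProbabilityMeasure unitMeasure :=
  ⟨by simp⟩

theorem unitMeasure_real_Iio {t : ℝ} (ht : t ∈ Set.Icc 0 1) : unitMeasure.real (Set.Iio t) = t := by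
  have inter_eq : Set.Iio t ∩ Set.Icc 0 1 = Set.Ico 0 t := by
    ext x
    simp only [Set.mem_inter_iff, Set.mem_Iio, Set.mem_Icc, Set.mem_Ico]
    grind
  rw [measureReal_restrict_apply measurableSet_Iio, inter_eq]
  simp [ht.1]

theorem uniformPermuton_eq_prod : uniformPermuton = unitMeasure.prod unitMeasure := by
  rw [uniformPermuton, Measure.volume_eq_prod, Measure.prod_restrict]

instance isProbabilityMeasure_uniformPermuton : IsProbabilityMeasure uniformPermuton := by
  rw [uniformPermuton_eq_prod]
  infer_instance

theorem pairwise_disjoint_gridCell (n : ℕ) :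
    Pairwise (Function.onFun Disjoint (gridCell : Fin n × Fin n → Set (ℝ × ℝ))) := by
  intro c d hcd
  refine Set.disjoint_left.2 fun x hc hd => hcd ?_
  have eq_of_mem {p q : Fin n} {y : ℝ} (hp : y ∈ cell n p) (hq : y ∈ cell n q) : p = q := by
    have mem_iff {r : ℕ} := mem_cell_iff (p := r) p.pos.ne' (cell_subset_Icc p hp).1
    exact Fin.ext ((mem_iff.1 hp).symm.trans (mem_iff.1 hq))
  exact Prod.ext (eq_of_mem hc.1 hd.1) (eq_of_mem hc.2 hd.2)

theorem ae_mem_iUnion_gridCell {n : ℕ} (hn : n ≠ 0) :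
    ∀ᵐ x ∂uniformPermuton, x ∈ ⋃ c : Fin n × Fin n, gridCell c := by
  have exists_mem_cell {y : ℝ} (hy : y ∈ Set.Ico 0 1) : ∃ p : Fin n, y ∈ cell n p :=
    ⟨⟨⌊y * n⌋₊, (Nat.floor_lt (by have := hy.1; positivity)).2
      (mul_lt_of_lt_one_left (by positivity) hy.2)⟩, (mem_cell_iff hn hy.1).2 rfl⟩
  have ae_mem_Ico : ∀ᵐ y ∂unitMeasure, y ∈ Set.Ico (0 : ℝ) 1 := by
    rw [unitMeasure, ← restrict_Ico_eq_restrict_Icc]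
    exact ae_restrict_mem measurableSet_Ico
  rw [uniformPermuton_eq_prod]
  filter_upwards [Measure.quasiMeasurePreserving_fst.ae ae_mem_Ico,
    Measure.quasiMeasurePreserving_snd.ae ae_mem_Ico] with x hx₁ hx₂
  obtain ⟨p, hp⟩ := exists_mem_cell hx₁
  obtain ⟨q, hq⟩ := exists_mem_cell hx₂
  exact Set.mem_iUnion.2 ⟨(p, q), hp, hq⟩

theorem sum_restrict_gridCell {n : ℕ} (hn : n ≠ 0) :
    ∑ c : Fin n × Fin n, uniformPermuton.restrict (gridCell c) = uniformPermuton := by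
  rw [← Measure.sum_fintype, ← Measure.restrict_iUnion (pairwise_disjoint_gridCell n)
    measurableSet_gridCell]
  exact Measure.restrict_eq_self_of_ae_mem (ae_mem_iUnion_gridCell hn)

theorem stepPermuton_eq_sum_restrict {n : ℕ} (A : Matrix (Fin n) (Fin n) ℝ) :
    stepPermuton A = ∑ c : Fin n × Fin n,
      ENNReal.ofReal (A c.1 c.2 * n) • uniformPermuton.restrict (gridCell c) := by
  rw [stepPermuton, Fintype.sum_prod_type]
  refine Finset.sum_congr rfl fun p _ => Finset.sum_congr rfl fun q _ => ?_
  have restrict_gridCell : uniformPermuton.restrict (gridCell (p, q)) =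
      volume.restrict (gridCell (p, q)) :=
    Measure.restrict_restrict_of_subset (Set.prod_mono (cell_subset_Icc p) (cell_subset_Icc q))
  rw [restrict_gridCell]
  rfl

theorem pertMatrix_single_apply {n : ℕ} (i j : Fin (n - 1)) (t : ℝ) (p q : Fin n) :
    pertMatrix n (Pi.single (i, j) t) p q = 1 / n + t * Bmat n i j p q := by
  rw [pertMatrix, Finset.sum_eq_single (i, j) (fun x _ hx => by simp [hx]) (by simp)]
  simp

theorem sum_Bmat_mul {n : ℕ} (i j : Fin (n - 1)) (u v : ℕ → ℝ) :
    ∑ c : Fin n × Fin n, Bmat n i j c.1 c.2 * (u c.1 * v c.2) =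
      (u i - u (i + 1)) * (v j - v (j + 1)) := by
  have Bmat_eq (p q : Fin n) : Bmat n i j p q =
      ((if (p : ℕ) = i then 1 else 0) - if (p : ℕ) = i + 1 then 1 else 0) *
        ((if (q : ℕ) = j then 1 else 0) - if (q : ℕ) = j + 1 then 1 else 0) := by
    simp only [Bmat]
    split_ifs <;> simp_all
  have sum_mul (i : Fin (n - 1)) (u : ℕ → ℝ) : ∑ p : Fin n,
      ((if (p : ℕ) = i then 1 else 0) - if (p : ℕ) = i + 1 then 1 else 0) * u p =
        u i - u (i + 1) := by
    rw [Fin.sum_univ_eq_sum_range (fun p => ((if p = (i : ℕ) then (1 : ℝ) else 0) -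
      if p = (i : ℕ) + 1 then 1 else 0) * u p)]
    simp [sub_mul, Finset.sum_sub_distrib, Nat.lt_of_lt_pred i.2, Nat.add_lt_of_lt_sub i.2]
  simp only [Bmat_eq, Fintype.sum_prod_type, ← sum_mul, Finset.sum_mul_sum]
  exact Finset.sum_congr rfl fun p _ => Finset.sum_congr rfl fun q _ => mul_mul_mul_comm ..

variable {k : ℕ}

/-- The drop of the mass that the law of the `m`-th of `k` increasing uniform points gives to the
cells of the grid, from the `p`-th cell to the next one. -/
noncomputable def cellMassDrop (n : ℕ) (m : Fin k) (p : ℕ) : ℝ :=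
  (orderStatMeasure unitMeasure m).real (cell n p) -
    (orderStatMeasure unitMeasure m).real (cell n (p + 1))

theorem hasDerivAt_permutonDensity_pertMatrix_single {n : ℕ} (π : Equiv.Perm (Fin k))
    (i j : Fin (n - 1)) :
    HasDerivAt
      (fun t : ℝ => PermutonDensity π (stepPermuton (pertMatrix n (Pi.single (i, j) t))))
      (n * k.factorial * ∑ m, cellMassDrop n m i * cellMassDrop n (π m) j) 0 := by
  have hn : n ≠ 0 := by have := i.2; omega
  have weight_eq (t : ℝ) (c : Fin n × Fin n) :
      pertMatrix n (Pi.single (i, j) t) c.1 c.2 * n = 1 + t * (Bmat n i j c.1 c.2 * n) := by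
    rw [pertMatrix_single_apply, add_mul, one_div_mul_cancel (by positivity), mul_assoc]
  have hasDerivAt_density := hasDerivAt_measureReal_pi_sum_smul
    (fun c : Fin n × Fin n => uniformPermuton.restrict (gridCell c))
    (fun c => Bmat n i j c.1 c.2 * n) (patternEvent π)
  have measurableSet_event (l : Fin k) (c : Fin n × Fin n) :
      MeasurableSet (Function.eval l ⁻¹' gridCell c : Set (Fin k → ℝ × ℝ)) :=
    measurable_pi_apply l (measurableSet_gridCell c)
  simp only [← weight_eq, ← stepPermuton_eq_sum_restrict, sum_restrict_gridCell hn,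
    pi_update_restrict, measureReal_restrict_apply' (measurableSet_event _ _)]
    at hasDerivAt_density
  refine hasDerivAt_density.congr_deriv (Finset.sum_comm.trans ?_)
  simp only [← Finset.mul_sum, uniformPermuton_eq_prod, gridCell,
    sum_measureReal_patternEvent_inter_eval_preimage_prod _ _ _ measurableSet_cell
      measurableSet_cell]
  simp only [Finset.mul_sum]
  refine Finset.sum_comm.trans (Finset.sum_congr rfl fun m _ => ?_)
  rw [cellMassDrop, cellMassDrop, ← sum_Bmat_mul i j
    (fun p => (orderStatMeasure unitMeasure m).real (cell n p))
    (fun q => (orderStatMeasure unitMeasure (π m)).real (cell n q)), Finset.mul_sum]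
  refine Finset.sum_congr rfl fun c _ => ?_
  ring

theorem factorial_mul_orderStatMeasure_cell {n p : ℕ} (hp : p < n) (m : Fin k) :
    k.factorial * (orderStatMeasure unitMeasure m).real (cell n p) =
      (bernsteinTail k m).eval ((p + 1) / n : ℝ) - (bernsteinTail k m).eval (p / n : ℝ) := by
  have hn : (0 : ℝ) < n := Nat.cast_pos.2 (by omega)
  have hp' : (p + 1 : ℝ) ≤ n := by exact_mod_cast hp
  have left_mem : (p / n : ℝ) ∈ Set.Icc 0 1 :=
    ⟨by positivity, (div_le_one hn).2 (by linarith)⟩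
  have right_mem : ((p + 1) / n : ℝ) ∈ Set.Icc 0 1 := ⟨by positivity, (div_le_one hn).2 hp'⟩
  have left_le_right : (p / n : ℝ) ≤ (p + 1) / n := by gcongr; linarith
  rw [cell, ← Set.Iio_sdiff_Iio,
    measureReal_sdiff (Set.Iio_subset_Iio left_le_right) measurableSet_Iio, mul_sub,
    factorial_mul_orderStatMeasure_Iio, factorial_mul_orderStatMeasure_Iio,
    unitMeasure_real_Iio left_mem, unitMeasure_real_Iio right_mem]

theorem eq_of_sum_mul_cellMassDrop_eq_zero {n : ℕ} (hkn : k ≤ n) {v : Fin k → ℝ}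
    (h : ∀ i : Fin (n - 1), ∑ m, v m * cellMassDrop n m i = 0) (m m' : Fin k) : v m = v m' := by
  let g (p : ℕ) : ℝ := ∑ m, v m * (orderStatMeasure unitMeasure m).real (cell n p)
  have g_succ (p : ℕ) (hp : p < n - 1) : g (p + 1) = g p := by
    have := h ⟨p, hp⟩
    simp only [cellMassDrop, mul_sub, Finset.sum_sub_distrib] at this
    exact (sub_eq_zero.1 this).symm
  have g_eq (p : ℕ) (hp : p < n) : g p = g 0 := by
    induction p with
    | zero => rfl
    | succ p ih => rw [g_succ p (by omega), ih (by omega)]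
  have increments_eq (p : ℕ) (hp : p < n) : ∑ m, v m * ((bernsteinTail k m).eval ((p + 1) / n : ℝ) -
      (bernsteinTail k m).eval (p / n : ℝ)) = k.factorial * g 0 := by
    simp only [← factorial_mul_orderStatMeasure_cell hp, ← g_eq p hp, g, Finset.mul_sum]
    exact Finset.sum_congr rfl fun m _ => mul_left_comm ..
  rw [eq_div_of_bernsteinTail_increments_eq hkn increments_eq m,
    eq_div_of_bernsteinTail_increments_eq hkn increments_eq m']

end Grid

section CoverCount

variable {k : ℕ}

open scoped Classical in
/-- The entries of the cover matrix of a set `S` of `k`-permutations, generalizing `coverMatrix`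
from `k = 4`: the number of `π ∈ S` with `π j = i`. -/
def coverCount (S : Finset (Equiv.Perm (Fin k))) (i j : Fin k) : ℕ :=
  (S.filter fun π => π j = i).card

theorem sum_coverCount_left (S : Finset (Equiv.Perm (Fin k))) (j : Fin k) :
    ∑ i, coverCount S i j = S.card := by
  classical
  exact (Finset.card_eq_sum_card_fiberwise fun _ _ => Finset.mem_univ _).symm

theorem sum_coverCount_right (S : Finset (Equiv.Perm (Fin k))) (i : Fin k) :
    ∑ j, coverCount S i j = S.card := by
  classical
  rw [Finset.card_eq_sum_card_fiberwise (f := fun π => π⁻¹ i) (t := Finset.univ)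
    fun _ _ => Finset.mem_univ _]
  refine Finset.sum_congr rfl fun j _ => congrArg Finset.card (Finset.filter_congr fun π _ => ?_)
  rw [Equiv.Perm.inv_eq_iff_eq, eq_comm]

theorem sum_sum_apply_eq_sum_coverCount_mul (S : Finset (Equiv.Perm (Fin k)))
    (f : Fin k → Fin k → ℝ) :
    ∑ π ∈ S, ∑ j, f (π j) j = ∑ j, ∑ i, coverCount S i j * f i j := by
  classical
  rw [Finset.sum_comm]
  refine Finset.sum_congr rfl fun j _ => ?_
  rw [← Finset.sum_fiberwise S (fun π => π j)]
  refine Finset.sum_congr rfl fun i _ => ?_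
  rw [Finset.sum_congr rfl fun π hπ => by rw [(Finset.mem_filter.1 hπ).2], Finset.sum_const,
    nsmul_eq_mul, coverCount]

theorem eq_div_card_of_sum_sum_mul_eq_zero {κ ι : Type*} [Fintype κ] {C : κ → κ → ℝ} {s : ℝ}
    (hrow : ∀ r, ∑ m, C r m = s) (hcol : ∀ m, ∑ r, C r m = s) {D : κ → ι → ℝ}
    (hD : ∀ v : κ → ℝ, (∀ i, ∑ m, v m * D m i = 0) → ∀ m m', v m = v m')
    (h : ∀ i j, ∑ m, ∑ r, C r m * (D m i * D r j) = 0) (r m : κ) :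
    C r m = s / Fintype.card κ := by
  have : Nonempty κ := ⟨r⟩
  have card_ne_zero : (Fintype.card κ : ℝ) ≠ 0 := Nat.cast_ne_zero.2 Fintype.card_ne_zero
  have eq_of_sum {v : κ → ℝ} {s : ℝ} (hv : ∀ m m', v m = v m') (hs : ∑ m, v m = s) (m : κ) :
      v m = s / Fintype.card κ := by
    rw [← hs, Finset.sum_congr rfl fun m' _ => hv m' m]
    simp [card_ne_zero]
  have column_pairing_eq (j : ι) : ∀ m m', ∑ r, C r m * D r j = ∑ r, C r m' * D r j := by
    refine hD _ fun i => ?_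
    rw [← h i j]
    refine Finset.sum_congr rfl fun m _ => ?_
    rw [Finset.sum_mul]
    exact Finset.sum_congr rfl fun r _ => by ring
  have column_eq (m' : κ) (r : κ) : C r m' = C r m := by
    refine sub_eq_zero.1 ((eq_of_sum (s := 0) (v := fun r => C r m' - C r m)
      (hD _ fun j => ?_) ?_ r).trans (zero_div _))
    · simp only [sub_mul, Finset.sum_sub_distrib, column_pairing_eq j m' m, sub_self]
    · rw [Finset.sum_sub_distrib, hcol, hcol, sub_self]
  exact eq_of_sum (fun m m' => (column_eq m r).trans (column_eq m' r).symm) (hrow r) m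

theorem hasDerivAt_sum_permutonDensity_pertMatrix_single {n : ℕ} (S : Finset (Equiv.Perm (Fin k)))
    (i j : Fin (n - 1)) :
    HasDerivAt
      (fun t : ℝ => ∑ π ∈ S, PermutonDensity π (stepPermuton (pertMatrix n (Pi.single (i, j) t))))
      (n * k.factorial *
        ∑ m, ∑ r, coverCount S r m * (cellMassDrop n m i * cellMassDrop n r j)) 0 := by
  rw [← sum_sum_apply_eq_sum_coverCount_mul S fun r m => cellMassDrop n m i * cellMassDrop n r j,
    Finset.mul_sum]
  exact HasDerivAt.fun_sum fun π _ => hasDerivAt_permutonDensity_pertMatrix_single π i j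

end CoverCount

theorem statement_14_general {k n : ℕ} (hkn : k ≤ n) (S : Finset (Equiv.Perm (Fin k)))
    (hC : ¬ ∃ c : ℕ, ∀ i j : Fin k, coverCount S i j = c) :
    ∃ i j : Fin (n - 1), deriv (fun t : ℝ =>
      ∑ π ∈ S, PermutonDensity π (stepPermuton (pertMatrix n (Pi.single (i, j) t)))) 0 ≠ 0 := by
  by_contra! deriv_eq_zero
  have pairing_eq_zero (i j : Fin (n - 1)) : ∑ m, ∑ r,
      (coverCount S r m : ℝ) * (cellMassDrop n m i * cellMassDrop n r j) = 0 := by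
    have hn : (n : ℝ) ≠ 0 := Nat.cast_ne_zero.2 (by have := i.2; omega)
    have deriv_eq := (hasDerivAt_sum_permutonDensity_pertMatrix_single S i j).deriv
    rw [deriv_eq_zero i j] at deriv_eq
    exact (mul_eq_zero_iff_left (by positivity)).1 deriv_eq.symm
  have coverCount_eq (r m : Fin k) : (coverCount S r m : ℝ) = S.card / Fintype.card (Fin k) :=
    eq_div_card_of_sum_sum_mul_eq_zero (fun r => by exact_mod_cast sum_coverCount_right S r)
      (fun m => by exact_mod_cast sum_coverCount_left S m)
      (fun _ => eq_of_sum_mul_cellMassDrop_eq_zero hkn) pairing_eq_zero r m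
  refine hC ⟨S.card / Fintype.card (Fin k), fun r m => ?_⟩
  rw [← Nat.floor_natCast (R := ℝ) (coverCount S r m), coverCount_eq, Nat.floor_div_eq_div]

theorem statement_14 (S : Finset (Equiv.Perm (Fin 4)))
    (hC : ¬ ∃ c : ℕ, ∀ i j : Fin 4, coverMatrix S i j = c) :
    ∃ n : ℕ, 2 ≤ n ∧ ∃ i j : Fin (n - 1),
      deriv (fun t : ℝ => hSN n S (Pi.single (i, j) t)) 0 ≠ 0 :=
  ⟨4, by norm_num, statement_14_general le_rfl S hC⟩
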